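/- Let p be a prime, e ≥ 1, q = p^e, r ≥ 2, and let A be any finite abelian group of order q^{r+1}(q^{r−1}−1)/(q−1) containing a subgroup isomorphic to the elementary abelian group (ZMod p)^{e·r} (an elementary abelian subgroup of order q^r). Then there exists a reversible identity-free subset D' of the generalized dihedral group G = Dih(A) such that the Cayley graph Cay(G, D') is a divisible design graph with parameters v = 2q^{r+1}(q^{r−1}−1)/(q−1), k = q^{r−1}(q(q+1)(q^{r−1}−1)/(q−1) − 1), λ1 = q^{r−1}(q^r + q^{r−1} + q − 1 + 2(q^{r−1}−q^2)/(q−1)), λ2 = 2q^{r−2}((q^{r+1}−q^2)/(q−1) − 1), m = 2, n = q^{r+1}(q^{r−1}−1)/(q−1), the canonical partition being into the two cosets of A in G; the graph is proper whenever (q,r) ≠ (2,2). -/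

import Mathlib

open Classical

/-!
Let `H ≤ A` be the elementary abelian subgroup, viewed as `F_q^r`. It has exactly one hyperplane
more than it has cosets in `A`. Set one hyperplane `K` aside and put a translate of each of the
others into its own coset of `H`, forming `D ⊆ A`. Two distinct hyperplanes of `H` generate `H`, so
they meet uniformly after any translation: hence the differences between `K` and `D`, and those of
`D` outside `H`, are equidistributed. Every nonidentity element of `H` lies in the same number of
hyperplanes, so the numbers of differences of `K` and of `D` equal to a given `a ≠ 1` add up to a
constant. Therefore `(A ∖ K) ∪ D b` has only two difference counts in `Dih(A)`, one on `A` and one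
off `A`, and it is reversible because `K` is a subgroup and `D b` consists of involutions.
-/

section QNumber

/-- The `q`-number `[n]_q = 1 + q + ⋯ + q ^ (n - 1)`, which for a prime power `q` counts the
hyperplanes of an `n`-dimensional vector space over the field with `q` elements. -/
def qNumber (q n : ℕ) : ℕ :=
  ∑ i ∈ Finset.range n, q ^ i

theorem qNumber_succ (q n : ℕ) : qNumber q (n + 1) = q * qNumber q n + 1 :=
  geom_sum_succ

theorem qNumber_succ_pos (q n : ℕ) : 0 < qNumber q (n + 1) := by
  rw [qNumber_succ]
  exact Nat.succ_pos _

theorem natCast_qNumber {K : Type*} [DivisionRing K] [CharZero K] {q : ℕ} (hq : q ≠ 1) (n : ℕ) :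
    (qNumber q n : K) = ((q : K) ^ n - 1) / ((q : K) - 1) := by
  rw [← geom_sum_eq (Nat.cast_ne_one.2 hq), qNumber]
  push_cast
  rfl

end QNumber

section Hyperplanes

open Module

variable {F V : Type*} [Field F] [AddCommGroup V] [Module F V]

theorem finrank_add_one_of_isCoatom [FiniteDimensional F V] {W : Submodule F V}
    (hW : IsCoatom W) : finrank F W + 1 = finrank F V := by
  rw [← isSimpleModule_iff_isCoatom, isSimpleModule_iff_finrank_eq_one] at hW
  rw [← W.finrank_quotient_add_finrank, hW, add_comm]

theorem finrank_inf_add_two_of_isCoatom [FiniteDimensional F V] {W U : Submodule F V}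
    (hW : IsCoatom W) (hU : IsCoatom U) (hWU : W ≠ U) :
    finrank F (W ⊓ U : Submodule F V) + 2 = finrank F V := by
  have hsup : finrank F (W ⊔ U : Submodule F V) = finrank F V := by
    rw [hW.sup_eq_top_of_ne hU hWU, finrank_top]
  have hdim := Submodule.finrank_sup_add_finrank_inf_eq W U
  have hWdim := finrank_add_one_of_isCoatom hW
  have hUdim := finrank_add_one_of_isCoatom hU
  omega

theorem card_isCoatom [FiniteDimensional F V] [Finite F] :
    Nat.card {W : Submodule F V // IsCoatom W} = qNumber (Nat.card F) (finrank F V) := by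
  rw [qNumber, ← Projectivization.card_of_finrank F (Dual F V) Subspace.dual_finrank_eq,
    Nat.card_congr (Projectivization.equivSubmodule F (Dual F V))]
  refine Nat.card_congr ((Subspace.orderIsoFiniteDimensional (K := F) (V := V)).toEquiv.trans
    OrderDual.ofDual |>.subtypeEquiv fun W => ?_)
  rw [← Submodule.isAtom_iff_finrank_eq_one,
    ← OrderIso.isCoatom_iff Subspace.orderIsoFiniteDimensional, ← isAtom_dual_iff_isCoatom]
  rfl

theorem card_isCoatom_ge [FiniteDimensional F V] [Finite F] (U : Submodule F V) :
    Nat.card {W : {W : Submodule F V // IsCoatom W} // U ≤ W} =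
      qNumber (Nat.card F) (finrank F (V ⧸ U)) := by
  rw [← card_isCoatom]
  refine Nat.card_congr ((Equiv.subtypeSubtypeEquivSubtypeInter _ _).trans ?_)
  refine (Equiv.subtypeEquivRight fun _ => and_comm).trans
    ((Equiv.subtypeSubtypeEquivSubtypeInter (U ≤ ·) IsCoatom).symm.trans ?_)
  refine ((Submodule.comapMkQRelIso U).toEquiv.subtypeEquiv fun W => ?_).symm
  rw [← (Submodule.comapMkQRelIso U).isCoatom_iff]
  exact ⟨IsCoatom.of_isCoatom_coe_Ici, fun h => h.Ici _⟩

theorem card_isCoatom_mem [FiniteDimensional F V] [Finite F] {v : V} (hv : v ≠ 0) :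
    Nat.card {W : {W : Submodule F V // IsCoatom W} // v ∈ W.1} =
      qNumber (Nat.card F) (finrank F V - 1) := by
  have hquot := (Submodule.span F {v}).finrank_quotient_add_finrank
  rw [finrank_span_singleton hv] at hquot
  simp_rw [← Submodule.span_singleton_le_iff_mem, card_isCoatom_ge, ← hquot, Nat.add_sub_cancel]

end Hyperplanes

section DiffCount

variable {G : Type*} [Group G]

/-- The number of `x ∈ X`, `y ∈ Y` with difference `x⁻¹ * y = c`, that is, the coefficient of `c`
in the product of `X⁻¹` and `Y` in the group ring. -/
noncomputable def diffCount (X Y : Set G) (c : G) : ℕ :=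
  {x | x ∈ X ∧ x * c ∈ Y}.ncard

theorem ncard_setOf_mul_mem (X : Set G) (g : G) : {x | x * g ∈ X}.ncard = X.ncard :=
  Nat.card_congr ((Equiv.mulRight g).subtypeEquiv fun _ => Iff.rfl)

theorem ncard_mul_inv_mem_and_mul_inv_mem (X Y : Set G) (g h : G) :
    {x | x * g⁻¹ ∈ X ∧ x * h⁻¹ ∈ Y}.ncard = diffCount X Y (g * h⁻¹) := by
  rw [diffCount, ← ncard_setOf_mul_mem {x | x ∈ X ∧ x * (g * h⁻¹) ∈ Y} g⁻¹]
  simp only [Set.mem_ofPred_eq, mul_assoc, inv_mul_cancel_left]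

theorem diffCount_inv (X Y : Set G) (c : G) : diffCount X Y c⁻¹ = diffCount Y X c := by
  rw [diffCount, diffCount, ← ncard_setOf_mul_mem _ c]
  simp [and_comm]

variable [Finite G]

theorem diffCount_add_diffCount_compl_right (X Y : Set G) (c : G) :
    diffCount X Y c + diffCount X Yᶜ c = X.ncard :=
  Set.ncard_inter_add_ncard_sdiff_eq_ncard X {x | x * c ∈ Y}

theorem diffCount_add_diffCount_compl_left (X Y : Set G) (c : G) :
    diffCount X Y c + diffCount Xᶜ Y c = Y.ncard := by
  rw [← diffCount_inv Y X, ← diffCount_inv Y Xᶜ, diffCount_add_diffCount_compl_right]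

theorem diffCount_compl_compl_add (X : Set G) (c : G) :
    diffCount Xᶜ Xᶜ c + 2 * X.ncard = Nat.card G + diffCount X X c := by
  have hleft := diffCount_add_diffCount_compl_left X Xᶜ c
  have hright := diffCount_add_diffCount_compl_right X X c
  have hcompl := Set.ncard_add_ncard_compl X
  omega

theorem diffCount_iUnion_left {I : Type*} [Fintype I] {X : I → Set G}
    (hX : Pairwise (Function.onFun Disjoint X)) (Y : Set G) (c : G) :
    diffCount (⋃ i, X i) Y c = ∑ i, diffCount (X i) Y c := by
  have hsplit : {x | x ∈ ⋃ i, X i ∧ x * c ∈ Y} = ⋃ i, {x | x ∈ X i ∧ x * c ∈ Y} := by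
    ext x; simp
  rw [diffCount, hsplit, Set.ncard_iUnion_of_finite (fun _ => Set.toFinite _),
    finsum_eq_sum_of_fintype]
  · rfl
  · exact fun i j hij => (hX hij).mono (fun _ hx => hx.1) (fun _ hx => hx.1)

end DiffCount

open scoped Pointwise in
theorem diffCount_smul_left {A : Type*} [CommGroup A] (g : A) (X Y : Set A) (c : A) :
    diffCount (g • X) Y c = diffCount X Y (g * c) := by
  rw [diffCount, diffCount, ← Set.ncard_smul_set g {x | x ∈ X ∧ x * (g * c) ∈ Y}]
  congr 1
  ext x
  simp only [Set.mem_smul_set_iff_inv_smul_mem, smul_eq_mul, Set.mem_ofPred_eq, mul_mul_mul_comm,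
    inv_mul_cancel, one_mul]

theorem diffCount_subgroup {A : Type*} [CommGroup A] (K L : Subgroup A) (c : A) :
    diffCount (K : Set A) L c = if c ∈ K ⊔ L then Nat.card (K ⊓ L : Subgroup A) else 0 := by
  split_ifs with hc
  · obtain ⟨k, hk, l, hl, rfl⟩ := Subgroup.mem_sup.1 hc
    rw [diffCount, ← ncard_setOf_mul_mem _ k⁻¹]
    refine congrArg Set.ncard (?_ : _ = ((K ⊓ L : Subgroup A) : Set A))
    ext x
    simp only [Set.mem_ofPred_eq, ← mul_assoc, inv_mul_cancel_right, SetLike.mem_coe,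
      Subgroup.mem_inf, K.mul_mem_cancel_right (K.inv_mem hk), L.mul_mem_cancel_right hl]
  · have hempty : {x | x ∈ (K : Set A) ∧ x * c ∈ (L : Set A)} = ∅ := by
      refine Set.eq_empty_of_forall_notMem fun x ⟨hx, hxc⟩ => hc ?_
      exact Subgroup.mem_sup.2 ⟨x⁻¹, K.inv_mem hx, x * c, hxc, inv_mul_cancel_left x c⟩
    rw [diffCount, hempty, Set.ncard_empty]

section CosetUnion

open scoped Pointwise

variable {A : Type*} [CommGroup A] {H : Subgroup A} {κ : A ⧸ H → Subgroup A}

/-- The union over all cosets `c` of `H` of a translate of `κ c` by a representative of `c`. When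
every `κ c` lies in `H`, the translates lie in their own cosets. -/
noncomputable def cosetUnion (κ : A ⧸ H → Subgroup A) : Set A :=
  ⋃ c, c.out • (κ c : Set A)

theorem mk_eq_of_mem_out_smul (hκ : ∀ c, κ c ≤ H) {c : A ⧸ H} {a : A}
    (ha : a ∈ c.out • (κ c : Set A)) : (a : A ⧸ H) = c := by
  obtain ⟨u, hu, rfl⟩ := ha
  exact (QuotientGroup.mk_mul_of_mem _ (hκ c hu)).trans (QuotientGroup.out_eq' c)

theorem pairwise_disjoint_out_smul (hκ : ∀ c, κ c ≤ H) :
    Pairwise (Function.onFun Disjoint fun c : A ⧸ H => c.out • (κ c : Set A)) :=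
  fun _ _ hcd => Set.disjoint_left.2 fun _ hc hd =>
    hcd ((mk_eq_of_mem_out_smul hκ hc).symm.trans (mk_eq_of_mem_out_smul hκ hd))

theorem mem_cosetUnion_iff (hκ : ∀ c, κ c ≤ H) {a : A} :
    a ∈ cosetUnion κ ↔ (a : A ⧸ H).out⁻¹ * a ∈ κ a := by
  simp_rw [cosetUnion, Set.mem_iUnion]
  constructor
  · rintro ⟨c, hc⟩
    obtain rfl := mk_eq_of_mem_out_smul hκ hc
    exact Set.mem_smul_set_iff_inv_smul_mem.1 hc
  · exact fun h => ⟨a, Set.mem_smul_set_iff_inv_smul_mem.2 h⟩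

theorem out_inv_mul_mem (a : A) : (a : A ⧸ H).out⁻¹ * a ∈ H :=
  QuotientGroup.eq.1 (QuotientGroup.out_eq' _)

theorem diffCount_subgroup_cosetUnion (hκ : ∀ c, κ c ≤ H) {L : Subgroup A} (hL : L ≤ H)
    (a : A) : diffCount (L : Set A) (cosetUnion κ) a =
      diffCount (L : Set A) (κ a) ((a : A ⧸ H).out⁻¹ * a) := by
  refine congrArg Set.ncard (Set.ext fun x => and_congr_right fun hx => ?_)
  have hxa : ((x * a : A) : A ⧸ H) = a := by
    rw [mul_comm, QuotientGroup.mk_mul_of_mem _ (hL hx)]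
  rw [mem_cosetUnion_iff hκ, hxa, mul_left_comm, SetLike.mem_coe]

theorem diffCount_subgroup_cosetUnion_of_sup_eq (hκ : ∀ c, κ c ≤ H) {L : Subgroup A} {a : A}
    (hL : L ⊔ κ a = H) :
    diffCount (L : Set A) (cosetUnion κ) a = Nat.card (L ⊓ κ a : Subgroup A) := by
  rw [diffCount_subgroup_cosetUnion hκ (le_sup_left.trans_eq hL), diffCount_subgroup, hL,
    if_pos (out_inv_mul_mem a)]

variable [Finite A]

theorem ncard_cosetUnion [Fintype (A ⧸ H)] (hκ : ∀ c, κ c ≤ H) :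
    (cosetUnion κ).ncard = ∑ c, Nat.card (κ c) := by
  rw [cosetUnion, Set.ncard_iUnion_of_finite (fun _ => Set.toFinite _)
    (pairwise_disjoint_out_smul hκ), finsum_eq_sum_of_fintype]
  simp only [Set.ncard_smul_set]
  rfl

theorem diffCount_cosetUnion_self [Fintype (A ⧸ H)] (hκ : ∀ c, κ c ≤ H) (a : A) :
    diffCount (cosetUnion κ) (cosetUnion κ) a =
      ∑ c : A ⧸ H, diffCount (κ c : Set A) (cosetUnion κ) (c.out * a) := by
  conv_lhs => rw [cosetUnion, diffCount_iUnion_left (pairwise_disjoint_out_smul hκ)]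
  exact Finset.sum_congr rfl fun c _ => diffCount_smul_left _ _ _ _

end CosetUnion

section HyperplaneFamily

variable {A I : Type*} [CommGroup A]

/-- A family of subgroups of `H` with the incidence properties of the hyperplanes of a vector space:
each has `m` elements, any two generate `H` and share `μ` elements, and each nonidentity element of
`H` lies in `N` of them. -/
structure IsHyperplaneFamily (H : Subgroup A) (K : I → Subgroup A) (m μ N : ℕ) : Prop where
  le (i : I) : K i ≤ H
  card (i : I) : Nat.card (K i) = m
  sup_eq {i j : I} (hij : i ≠ j) : K i ⊔ K j = H
  card_inf {i j : I} (hij : i ≠ j) : Nat.card (K i ⊓ K j : Subgroup A) = μ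
  card_mem {a : A} (ha : a ∈ H) (ha1 : a ≠ 1) : Nat.card {i // a ∈ K i} = N

namespace IsHyperplaneFamily

variable {H : Subgroup A} {K : I → Subgroup A} {m μ N : ℕ}

theorem diffCount_self (hK : IsHyperplaneFamily H K m μ N) (i : I) (a : A) :
    diffCount (K i : Set A) (K i) a = if a ∈ K i then m else 0 := by
  rw [diffCount_subgroup, sup_idem, inf_idem, hK.card]

theorem diffCount_cosetUnion_of_ne (hK : IsHyperplaneFamily H K m μ N) {τ : A ⧸ H → I} {i : I}
    {a : A} (hi : i ≠ τ a) : diffCount (K i : Set A) (cosetUnion fun c => K (τ c)) a = μ := by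
  have hκ (c : A ⧸ H) : K (τ c) ≤ H := hK.le _
  rw [diffCount_subgroup_cosetUnion_of_sup_eq hκ (hK.sup_eq hi), hK.card_inf hi]

theorem diffCount_cosetUnion_of_notMem [Finite A] (hK : IsHyperplaneFamily H K m μ N)
    {τ : A ⧸ H → I} (hτ : Function.Injective τ) {a : A} (ha : a ∉ H) :
    diffCount (cosetUnion fun c => K (τ c)) (cosetUnion fun c => K (τ c)) a =
      Nat.card (A ⧸ H) * μ := by
  have := Fintype.ofFinite (A ⧸ H)
  have hne (c : A ⧸ H) : τ c ≠ τ (c.out * a : A) := by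
    rwa [hτ.ne_iff, QuotientGroup.mk_mul, QuotientGroup.out_eq', ne_eq, left_eq_mul,
      QuotientGroup.eq_one_iff]
  rw [diffCount_cosetUnion_self fun _ => hK.le _]
  simp_rw [hK.diffCount_cosetUnion_of_ne (hne _), Finset.sum_const, Finset.card_univ,
    smul_eq_mul, Nat.card_eq_fintype_card]

theorem diffCount_cosetUnion_add_of_mem [Finite A] (hK : IsHyperplaneFamily H K m μ N)
    (σ : Option (A ⧸ H) ≃ I) {a : A} (ha : a ∈ H) (ha1 : a ≠ 1) :
    diffCount (K (σ none) : Set A) (K (σ none)) a +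
      diffCount (cosetUnion fun c => K (σ (some c))) (cosetUnion fun c => K (σ (some c))) a =
        m * N := by
  have := Fintype.ofFinite (A ⧸ H)
  have := Fintype.ofEquiv _ σ
  have hκ (c : A ⧸ H) : K (σ (some c)) ≤ H := hK.le _
  have hmk (c : A ⧸ H) : ((c.out * a : A) : A ⧸ H) = c := by
    rw [QuotientGroup.mk_mul_of_mem _ ha, QuotientGroup.out_eq']
  calc
    _ = ∑ j, diffCount (K j : Set A) (K j) a := by
      simp_rw [diffCount_cosetUnion_self hκ, diffCount_subgroup_cosetUnion hκ (hκ _), hmk,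
        inv_mul_cancel_left, ← σ.sum_comp, Fintype.sum_option]
    _ = Fintype.card {j // a ∈ K j} * m := by
      simp_rw [hK.diffCount_self, ← Finset.sum_filter, Finset.sum_const, smul_eq_mul,
        Fintype.card_subtype]
    _ = m * N := by rw [← Nat.card_eq_fintype_card, hK.card_mem ha ha1, mul_comm]

theorem exists_ncard_eq_and_diffCount_eq [Finite A] (hK : IsHyperplaneFamily H K m μ N)
    (hI : Nat.card I = Nat.card (A ⧸ H) + 1) (hμ : Nat.card (A ⧸ H) * μ = m * N) :
    ∃ (i : I) (D : Set A), D.ncard = Nat.card (A ⧸ H) * m ∧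
      (∀ a, diffCount (K i : Set A) D a = μ) ∧
      ∀ a ≠ 1, diffCount (K i : Set A) (K i) a + diffCount D D a = m * N := by
  have := Fintype.ofFinite (A ⧸ H)
  have : Finite I := Nat.finite_of_card_ne_zero (by omega)
  let σ : Option (A ⧸ H) ≃ I := (Finite.card_eq.1 (by rw [hI, Finite.card_option])).some
  refine ⟨σ none, cosetUnion fun c => K (σ (some c)), ?_, fun a => ?_, fun a ha1 => ?_⟩
  · simp_rw [ncard_cosetUnion fun _ => hK.le _, hK.card, Finset.sum_const, Finset.card_univ,
      smul_eq_mul, Nat.card_eq_fintype_card]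
  · exact hK.diffCount_cosetUnion_of_ne (τ := fun c => σ (some c)) (by simp)
  · by_cases ha : a ∈ H
    · exact hK.diffCount_cosetUnion_add_of_mem σ ha ha1
    · have hinj : Function.Injective fun c => σ (some c) :=
        σ.injective.comp (Option.some_injective _)
      rw [hK.diffCount_cosetUnion_of_notMem hinj ha, hK.diffCount_self,
        if_neg fun h => ha (hK.le _ h), hμ, zero_add]

end IsHyperplaneFamily

end HyperplaneFamily

section ImageOfSubmodule

open Module

variable {F V A : Type*} [Field F] [AddCommGroup V] [Module F V] [CommGroup A]
  {φ : Multiplicative V →* A}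

/-- The image in `A` of a subspace `W` of `V`, under a homomorphism from the multiplicatively
written additive group of `V`. -/
def imageSubgroup (φ : Multiplicative V →* A) (W : Submodule F V) : Subgroup A :=
  (AddSubgroup.toSubgroup W.toAddSubgroup).map φ

theorem ofAdd_mem_imageSubgroup (hφ : Function.Injective φ) {W : Submodule F V}
    {v : V} :
    φ (Multiplicative.ofAdd v) ∈ imageSubgroup φ W ↔ v ∈ W :=
  Subgroup.mem_map_iff_mem hφ

theorem card_imageSubgroup (hφ : Function.Injective φ) (W : Submodule F V) :
    Nat.card (imageSubgroup φ W) = Nat.card W :=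
  Subgroup.card_map_of_injective hφ

theorem imageSubgroup_inf (hφ : Function.Injective φ) (W U : Submodule F V) :
    imageSubgroup φ W ⊓ imageSubgroup φ U = imageSubgroup φ (W ⊓ U) :=
  (Subgroup.map_inf _ _ φ hφ).symm

theorem imageSubgroup_sup_of_sup_eq_top {W U : Submodule F V} (h : W ⊔ U = ⊤) :
    imageSubgroup φ W ⊔ imageSubgroup φ U = φ.range := by
  refine le_antisymm (sup_le (Subgroup.map_le_range φ _) (Subgroup.map_le_range φ _)) ?_
  rintro _ ⟨v, rfl⟩
  obtain ⟨w, hw, u, hu, hwu⟩ := Submodule.mem_sup.1 (h.ge (Submodule.mem_top (x := v.toAdd)))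
  rw [← ofAdd_toAdd v, ← hwu, ofAdd_add, map_mul]
  exact Subgroup.mul_mem_sup (Subgroup.mem_map_of_mem φ hw) (Subgroup.mem_map_of_mem φ hu)

theorem isHyperplaneFamily_imageSubgroup [Finite F] [FiniteDimensional F V]
    (hφ : Function.Injective φ) {s : ℕ} (hV : finrank F V = s + 2) :
    IsHyperplaneFamily φ.range
      (fun W : {W : Submodule F V // IsCoatom W} => imageSubgroup φ W.1)
      (Nat.card F ^ (s + 1)) (Nat.card F ^ s) (qNumber (Nat.card F) (s + 1)) where
  le W := Subgroup.map_le_range φ _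
  card W := by
    have hdim := finrank_add_one_of_isCoatom W.2
    rw [card_imageSubgroup hφ, natCard_eq_pow_finrank (K := F)]
    congr 1; omega
  sup_eq {W U} hWU :=
    imageSubgroup_sup_of_sup_eq_top (W.2.sup_eq_top_of_ne U.2 (Subtype.coe_ne_coe.2 hWU))
  card_inf {W U} hWU := by
    have hdim := finrank_inf_add_two_of_isCoatom W.2 U.2 (Subtype.coe_ne_coe.2 hWU)
    rw [imageSubgroup_inf hφ, card_imageSubgroup hφ, natCard_eq_pow_finrank (K := F)]
    congr 1; omega
  card_mem := by
    rintro _ ⟨v, rfl⟩ hv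
    have hv0 : v.toAdd ≠ 0 := fun h => hv (by rw [← ofAdd_toAdd v, h, ofAdd_zero, map_one])
    rw [← Nat.add_sub_cancel (s + 1) 1, ← hV, ← card_isCoatom_mem hv0]
    exact Nat.card_congr (Equiv.subtypeEquivRight fun W => ofAdd_mem_imageSubgroup hφ)

end ImageOfSubmodule

section DivisibleDifferenceSet

/-- `D` is a `k`-subset of `G` with `l₁` differences equal to each nonidentity element of `H` and
`l₂` equal to each element outside `H`. For a reversible identity-free `D` this says that the Cayley
graph of `D` is a divisible design graph with respect to the right cosets of `H`. -/
structure IsDivisibleDifferenceSet {G : Type*} [Group G] (H : Subgroup G) (D : Set G)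
    (k l₁ l₂ : ℕ) : Prop where
  ncard_eq : D.ncard = k
  diffCount_of_mem {c : G} (hc : c ∈ H) (hc1 : c ≠ 1) : diffCount D D c = l₁
  diffCount_of_notMem {c : G} (hc : c ∉ H) : diffCount D D c = l₂

theorem IsDivisibleDifferenceSet.ncard_common {G : Type*} [Group G] {H : Subgroup G} {D : Set G}
    {k l₁ l₂ : ℕ} (hD : IsDivisibleDifferenceSet H D k l₁ l₂) {g h : G} (hgh : g ≠ h) :
    {x | x * g⁻¹ ∈ D ∧ x * h⁻¹ ∈ D}.ncard = if g * h⁻¹ ∈ H then l₁ else l₂ := by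
  rw [ncard_mul_inv_mem_and_mul_inv_mem]
  split_ifs with hH
  · exact hD.diffCount_of_mem hH (mul_inv_eq_one.not.2 hgh)
  · exact hD.diffCount_of_notMem hH

variable {A G : Type*} [CommGroup A] [Group G]

/-- `G` is an internal generalized dihedral group: the embedding `ι` identifies `A` with a subgroup
of index two, and `b` is an involution outside it acting on it by inversion. -/
structure IsGeneralizedDihedral (ι : A →* G) (b : G) : Prop where
  injective : Function.Injective ι
  mul_self : b * b = 1
  conj (a : A) : b * ι a * b⁻¹ = ι a⁻¹
  notMem_range : b ∉ ι.range
  exists_eq (g : G) : (∃ a, g = ι a) ∨ ∃ a, g = ι a * b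

/-- The subset `X ∪ Y b` of a generalized dihedral group with rotations `X` and reflections `Y b`,
for `X` and `Y` subsets of the abelian group `A`. -/
def dihedralUnion (ι : A →* G) (b : G) (X Y : Set A) : Set G :=
  ι '' X ∪ (fun a => ι a * b) '' Y

namespace IsGeneralizedDihedral

variable {ι : A →* G} {b : G}

theorem mul_map (h : IsGeneralizedDihedral ι b) (a : A) : b * ι a = ι a⁻¹ * b := by
  rw [← h.conj, inv_mul_cancel_right]

theorem map_mul_mul_map (h : IsGeneralizedDihedral ι b) (a c : A) :
    ι a * b * ι c = ι (a * c⁻¹) * b := by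
  rw [mul_assoc, h.mul_map, ← mul_assoc, map_mul]

theorem map_mul_mul_map_mul (h : IsGeneralizedDihedral ι b) (a c : A) :
    ι a * b * (ι c * b) = ι (a * c⁻¹) := by
  rw [← mul_assoc, h.map_mul_mul_map, mul_assoc, h.mul_self, mul_one]

theorem map_ne_map_mul (h : IsGeneralizedDihedral ι b) (a c : A) : ι a ≠ ι c * b := fun hac =>
  h.notMem_range ⟨c⁻¹ * a, by rw [map_mul, hac, map_inv, inv_mul_cancel_left]⟩

theorem bijective_sumElim (h : IsGeneralizedDihedral ι b) :
    Function.Bijective (Sum.elim ι fun a => ι a * b) := by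
  refine ⟨h.injective.sumElim ((mul_left_injective b).comp h.injective) h.map_ne_map_mul,
    fun g => ?_⟩
  obtain ⟨a, rfl⟩ | ⟨a, rfl⟩ := h.exists_eq g
  exacts [⟨.inl a, rfl⟩, ⟨.inr a, rfl⟩]

theorem ncard_eq_add [Finite A] (h : IsGeneralizedDihedral ι b) (S : Set G) :
    S.ncard = {a | ι a ∈ S}.ncard + {a | ι a * b ∈ S}.ncard := by
  let e := Equiv.ofBijective _ h.bijective_sumElim
  calc
    _ = Nat.card {x : A ⊕ A // e x ∈ S} :=
      Nat.card_congr (e.subtypeEquiv fun _ => Iff.rfl).symm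
    _ = _ := by rw [Nat.card_congr Equiv.subtypeSum, Nat.card_sum]; rfl

variable {X Y : Set A}

theorem map_mem_dihedralUnion (h : IsGeneralizedDihedral ι b) {a : A} :
    ι a ∈ dihedralUnion ι b X Y ↔ a ∈ X := by
  simp [dihedralUnion, h.injective.mem_set_image, (h.map_ne_map_mul _ _).symm]

theorem map_mul_mem_dihedralUnion (h : IsGeneralizedDihedral ι b) {a : A} :
    ι a * b ∈ dihedralUnion ι b X Y ↔ a ∈ Y := by
  simp [dihedralUnion, h.injective.eq_iff, h.map_ne_map_mul]

theorem inv_dihedralUnion (h : IsGeneralizedDihedral ι b) (hX : X⁻¹ = X) :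
    (dihedralUnion ι b X Y)⁻¹ = dihedralUnion ι b X Y := by
  ext g
  rw [Set.mem_inv]
  obtain ⟨a, rfl⟩ | ⟨a, rfl⟩ := h.exists_eq g
  · rw [← map_inv, h.map_mem_dihedralUnion, h.map_mem_dihedralUnion, ← Set.mem_inv, hX]
  · rw [mul_inv_rev, inv_eq_of_mul_eq_one_left h.mul_self, ← map_inv, h.mul_map, inv_inv]

theorem one_notMem_dihedralUnion (h : IsGeneralizedDihedral ι b) (hX : 1 ∉ X) :
    1 ∉ dihedralUnion ι b X Y := by
  rwa [← map_one ι, h.map_mem_dihedralUnion]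

variable [Finite A]

theorem ncard_dihedralUnion (h : IsGeneralizedDihedral ι b) :
    (dihedralUnion ι b X Y).ncard = X.ncard + Y.ncard := by
  simp_rw [h.ncard_eq_add, h.map_mem_dihedralUnion, h.map_mul_mem_dihedralUnion,
    Set.ofPred_mem_eq]

theorem diffCount_dihedralUnion_map (h : IsGeneralizedDihedral ι b) (c : A) :
    diffCount (dihedralUnion ι b X Y) (dihedralUnion ι b X Y) (ι c) =
      diffCount X X c + diffCount Y Y c := by
  rw [← diffCount_inv Y, diffCount, h.ncard_eq_add]
  simp_rw [Set.mem_ofPred_eq, h.map_mul_mul_map, ← map_mul, h.map_mem_dihedralUnion,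
    h.map_mul_mem_dihedralUnion]
  rfl

theorem diffCount_dihedralUnion_map_mul (h : IsGeneralizedDihedral ι b) (c : A) :
    diffCount (dihedralUnion ι b X Y) (dihedralUnion ι b X Y) (ι c * b) =
      2 * diffCount X Y c := by
  calc
    _ = diffCount X Y c + diffCount Y X c⁻¹ := by
      rw [diffCount, h.ncard_eq_add]
      simp_rw [Set.mem_ofPred_eq, h.map_mul_mul_map_mul, ← mul_assoc, ← map_mul,
        h.map_mem_dihedralUnion, h.map_mul_mem_dihedralUnion]
      rfl
    _ = 2 * diffCount X Y c := by rw [diffCount_inv, two_mul]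

theorem isDivisibleDifferenceSet_dihedralUnion_compl (h : IsGeneralizedDihedral ι b)
    {n μ k l₁ l₂ : ℕ} (hself : ∀ c ≠ 1, diffCount X X c + diffCount Y Y c = n)
    (hcross : ∀ c, diffCount X Y c = μ) (hk : k + X.ncard = Nat.card A + Y.ncard)
    (hl₁ : l₁ + 2 * X.ncard = Nat.card A + n) (hl₂ : l₂ + 2 * μ = 2 * Y.ncard) :
    IsDivisibleDifferenceSet ι.range (dihedralUnion ι b Xᶜ Y) k l₁ l₂ where
  ncard_eq := by
    have hcompl := Set.ncard_add_ncard_compl X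
    rw [h.ncard_dihedralUnion]
    omega
  diffCount_of_mem := by
    rintro _ ⟨c, rfl⟩ hc
    have hcompl := diffCount_compl_compl_add X c
    have hc := hself c fun h1 => hc (by rw [h1, map_one])
    rw [h.diffCount_dihedralUnion_map]
    omega
  diffCount_of_notMem {g} hg := by
    obtain ⟨c, rfl⟩ | ⟨c, rfl⟩ := h.exists_eq g
    · exact absurd ⟨c, rfl⟩ hg
    · have hcompl := diffCount_add_diffCount_compl_left X Y c
      have hc := hcross c
      rw [h.diffCount_dihedralUnion_map_mul]
      omega

end IsGeneralizedDihedral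

end DivisibleDifferenceSet

section Parameters

/-- The degree of the divisible design graph, with `s = r - 2`. The subtraction does not truncate
for `0 < q`. -/
def ddgDegree (q s : ℕ) : ℕ :=
  q ^ (s + 1) * ((q ^ 2 + q) * qNumber q (s + 1) - 1)

/-- The number `λ₁` of common neighbours of two vertices in the same class, with `s = r - 2`. The
subtraction does not truncate for `0 < q`. -/
def ddgLambda₁ (q s : ℕ) : ℕ :=
  q ^ (s + 1) * ((q ^ 2 + 1) * qNumber q (s + 1) - 2)

/-- The number `λ₂` of common neighbours of two vertices in different classes, with `s = r - 2`. The
subtraction does not truncate for `0 < q`. -/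
def ddgLambda₂ (q s : ℕ) : ℕ :=
  2 * q ^ s * (q ^ 2 * qNumber q (s + 1) - 1)

variable {q : ℕ}

theorem natCast_ddgDegree (hq : 0 < q) (s : ℕ) :
    (ddgDegree q s : ℚ) =
      (q : ℚ) ^ (s + 1) * (((q : ℚ) ^ 2 + q) * qNumber q (s + 1) - 1) := by
  have hle : 1 ≤ (q ^ 2 + q) * qNumber q (s + 1) :=
    Nat.mul_pos (by positivity) (qNumber_succ_pos q s)
  push_cast [ddgDegree, hle]
  rfl

theorem natCast_ddgLambda₁ (hq : 0 < q) (s : ℕ) :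
    (ddgLambda₁ q s : ℚ) =
      (q : ℚ) ^ (s + 1) * (((q : ℚ) ^ 2 + 1) * qNumber q (s + 1) - 2) := by
  have hle : 2 ≤ (q ^ 2 + 1) * qNumber q (s + 1) := by nlinarith [qNumber_succ_pos q s]
  push_cast [ddgLambda₁, hle]
  rfl

theorem natCast_ddgLambda₂ (hq : 0 < q) (s : ℕ) :
    (ddgLambda₂ q s : ℚ) = 2 * (q : ℚ) ^ s * ((q : ℚ) ^ 2 * qNumber q (s + 1) - 1) := by
  have hle : 1 ≤ q ^ 2 * qNumber q (s + 1) := Nat.mul_pos (by positivity) (qNumber_succ_pos q s)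
  push_cast [ddgLambda₂, hle]
  rfl

theorem natCast_ddgDegree_eq_div (hq : 1 < q) (s : ℕ) :
    (ddgDegree q s : ℚ) = (q : ℚ) ^ (s + 1) *
      ((q : ℚ) * ((q : ℚ) + 1) * ((q : ℚ) ^ (s + 1) - 1) / ((q : ℚ) - 1) - 1) := by
  rw [natCast_ddgDegree (by omega), natCast_qNumber hq.ne']
  ring

theorem natCast_ddgLambda₁_eq_div (hq : 1 < q) (s : ℕ) :
    (ddgLambda₁ q s : ℚ) = (q : ℚ) ^ (s + 1) *
      ((q : ℚ) ^ (s + 2) + (q : ℚ) ^ (s + 1) + (q : ℚ) - 1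
        + 2 * ((q : ℚ) ^ (s + 1) - (q : ℚ) ^ 2) / ((q : ℚ) - 1)) := by
  have hq0 : (q : ℚ) - 1 ≠ 0 := sub_ne_zero.2 (Nat.cast_ne_one.2 hq.ne')
  rw [natCast_ddgLambda₁ (by omega), natCast_qNumber hq.ne']
  field_simp
  ring

theorem natCast_ddgLambda₂_eq_div (hq : 1 < q) (s : ℕ) :
    (ddgLambda₂ q s : ℚ) = 2 * (q : ℚ) ^ s *
      (((q : ℚ) ^ (s + 3) - (q : ℚ) ^ 2) / ((q : ℚ) - 1) - 1) := by
  rw [natCast_ddgLambda₂ (by omega), natCast_qNumber hq.ne']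
  ring

theorem ddgLambda₁_sub_ddgLambda₂ (hq : 1 < q) (s : ℕ) :
    (ddgLambda₁ q s : ℚ) - ddgLambda₂ q s =
      (q : ℚ) ^ s * ((q : ℚ) - 1) * ((q : ℚ) ^ (s + 2) - (q + 2 : ℕ)) := by
  have hq0 : (q : ℚ) - 1 ≠ 0 := sub_ne_zero.2 (Nat.cast_ne_one.2 hq.ne')
  rw [natCast_ddgLambda₁_eq_div hq, natCast_ddgLambda₂_eq_div hq]
  push_cast
  field_simp
  ring

theorem pow_ne_add_two (hq : 1 < q) {s : ℕ} (hqs : ¬(q = 2 ∧ s = 0)) : q ^ (s + 2) ≠ q + 2 := by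
  intro heq
  obtain rfl | hq3 : q = 2 ∨ 3 ≤ q := by omega
  · have hs : s ≠ 0 := fun h => hqs ⟨rfl, h⟩
    have := Nat.pow_le_pow_right two_pos (show 3 ≤ s + 2 by omega)
    omega
  · have := Nat.pow_le_pow_right (by omega : 0 < q) (show 2 ≤ s + 2 by omega)
    nlinarith

theorem ddgLambda₁_ne_ddgLambda₂ (hq : 1 < q) {s : ℕ} (hqs : ¬(q = 2 ∧ s = 0)) :
    ddgLambda₁ q s ≠ ddgLambda₂ q s := by
  have hq0 : (q : ℚ) ^ s * ((q : ℚ) - 1) ≠ 0 := mul_ne_zero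
    (pow_ne_zero s (Nat.cast_ne_zero.2 (by omega))) (sub_ne_zero.2 (Nat.cast_ne_one.2 hq.ne'))
  rw [← Nat.cast_injective (R := ℚ) |>.ne_iff, ← sub_ne_zero, ddgLambda₁_sub_ddgLambda₂ hq]
  exact mul_ne_zero hq0 (sub_ne_zero.2 (mod_cast pow_ne_add_two hq hqs))

end Parameters

section Construction

open Module

variable {F V A G : Type*} [Field F] [AddCommGroup V] [Module F V] [CommGroup A] [Group G]
  {q s n : ℕ}

theorem card_quotient_range [Finite F] [FiniteDimensional F V] {φ : Multiplicative V →* A}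
    (hφ : Function.Injective φ) (hF : Nat.card F = q) (hV : finrank F V = s + 2)
    (hA : Nat.card A = q ^ (s + 3) * n) : Nat.card (A ⧸ φ.range) = q * n := by
  have hq : 0 < q := hF ▸ Nat.card_pos
  have hrange : Nat.card φ.range = q ^ (s + 2) := by
    rw [← Nat.card_congr (φ.ofInjective hφ).toEquiv, Nat.card_congr Multiplicative.toAdd,
      natCard_eq_pow_finrank (K := F), hF, hV]
  have hlagrange := φ.range.card_eq_card_quotient_mul_card_subgroup
  rw [hA, hrange, show q ^ (s + 3) * n = q * n * q ^ (s + 2) by ring] at hlagrange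
  exact (Nat.eq_of_mul_eq_mul_right (by positivity) hlagrange).symm

theorem IsGeneralizedDihedral.exists_isDivisibleDifferenceSet [Finite F] [FiniteDimensional F V]
    {ι : A →* G} {b : G} (h : IsGeneralizedDihedral ι b) {φ : Multiplicative V →* A}
    (hφ : Function.Injective φ) (hF : Nat.card F = q) (hV : finrank F V = s + 2)
    (hA : Nat.card A = q ^ (s + 3) * qNumber q (s + 1)) :
    ∃ D : Set G, D⁻¹ = D ∧ 1 ∉ D ∧
      IsDivisibleDifferenceSet ι.range D (ddgDegree q s) (ddgLambda₁ q s) (ddgLambda₂ q s) := by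
  have hq : 0 < q := hF ▸ Nat.card_pos
  have : Finite A := Nat.finite_of_card_ne_zero
    (hA ▸ (Nat.mul_pos (by positivity) (qNumber_succ_pos q s)).ne')
  have hquot := card_quotient_range hφ hF hV hA
  have hcoatom : Nat.card {W : Submodule F V // IsCoatom W} = Nat.card (A ⧸ φ.range) + 1 := by
    rw [card_isCoatom, hF, hV, qNumber_succ, hquot]
  have hK := isHyperplaneFamily_imageSubgroup hφ hV
  rw [hF] at hK
  obtain ⟨W, D, hD, hcross, hself⟩ :=
    hK.exists_ncard_eq_and_diffCount_eq hcoatom (by rw [hquot]; ring)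
  have hW : (imageSubgroup φ W.1 : Set A).ncard = q ^ (s + 1) := hK.card W
  refine ⟨dihedralUnion ι b (imageSubgroup φ W.1 : Set A)ᶜ D,
    h.inv_dihedralUnion (by rw [Set.compl_inv, inv_coe_set]),
    h.one_notMem_dihedralUnion fun h1 => h1 (one_mem _),
    h.isDivisibleDifferenceSet_dihedralUnion_compl hself hcross ?_ ?_ ?_⟩
  all_goals
    simp only [hW, hA, hD, hquot]
    qify
    simp only [natCast_ddgDegree hq, natCast_ddgLambda₁ hq, natCast_ddgLambda₂ hq]
    ring

end Construction

section GaloisField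

open Module

theorem nonempty_addEquiv_pi_galoisField (p : ℕ) [Fact p.Prime] {e : ℕ} (he : e ≠ 0) (r : ℕ) :
    Nonempty ((Fin r → GaloisField p e) ≃+ (Fin (e * r) → ZMod p)) := by
  have hdim : finrank (ZMod p) (Fin r → GaloisField p e) =
      finrank (ZMod p) (Fin (e * r) → ZMod p) := by
    simp [finrank_pi_fintype, GaloisField.finrank p he, mul_comm]
  exact ⟨(LinearEquiv.ofFinrankEq _ _ hdim).toAddEquiv⟩

theorem exists_injective_monoidHom_of_pi_galoisField {A : Type*} [Group A] {p e r : ℕ}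
    [Fact p.Prime] (he : e ≠ 0)
    (h : ∃ H : Subgroup A, Nonempty (H ≃* Multiplicative (Fin (e * r) → ZMod p))) :
    ∃ φ : Multiplicative (Fin r → GaloisField p e) →* A, Function.Injective φ := by
  obtain ⟨H, ⟨E⟩⟩ := h
  obtain ⟨T⟩ := nonempty_addEquiv_pi_galoisField p he r
  exact ⟨H.subtype.comp ((AddEquiv.toMultiplicative T).trans E.symm).toMonoidHom,
    H.subtype_injective.comp (MulEquiv.injective _)⟩

end GaloisField

/-- for `q = p^e` a prime power, `r ≥ 2`, and `A` a finite abelian group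
of order `q^(r+1)(q^(r−1)−1)/(q−1)` containing an elementary abelian subgroup of
order `q^r`, the generalized dihedral group `G = Dih(A)` carries a reversible
identity-free subset `D'` such that `Cay(G, D')` is a divisible design graph with
parameters `v = 2q^(r+1)(q^(r−1)−1)/(q−1)`, `k = q^(r−1)(q(q+1)(q^(r−1)−1)/(q−1) − 1)`,
`λ1 = q^(r−1)(q^r + q^(r−1) + q − 1 + 2(q^(r−1)−q²)/(q−1))`,
`λ2 = 2q^(r−2)((q^(r+1)−q²)/(q−1) − 1)`, `m = 2`, `n = q^(r+1)(q^(r−1)−1)/(q−1)`,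
with canonical partition into the two cosets of `A` in `G`; the graph is proper
whenever `(q, r) ≠ (2, 2)`. -/
theorem dihedral_ddg_family_eq1
    (p e q r : ℕ) (hp : p.Prime) (he : 1 ≤ e) (hq : q = p ^ e) (hr : 2 ≤ r)
    (A : Type*) [CommGroup A] [Fintype A] [DecidableEq A]
    (hcardA : (Fintype.card A : ℚ)
        = (q : ℚ) ^ (r + 1) * ((q : ℚ) ^ (r - 1) - 1) / ((q : ℚ) - 1))
    (hsub : ∃ H : Subgroup A, Nonempty (H ≃* Multiplicative (Fin (e * r) → ZMod p)))
    (G : Type*) [Group G] [Fintype G]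
    (ι : A →* G) (hinj : Function.Injective ι)
    (b : G) (hb2 : b * b = 1) (hb1 : b ≠ 1)
    (hbconj : ∀ a : A, b * ι a * b⁻¹ = ι a⁻¹)
    (hbnot : b ∉ Set.range ι)
    (hcardG : Fintype.card G = 2 * Fintype.card A)
    (hdecomp : ∀ g : G, (∃ a, g = ι a) ∨ (∃ a, g = ι a * b)) :
    ∃ (D' : Set G) (k l1 l2 nn : ℕ),
      D'⁻¹ = D' ∧
      (1 : G) ∉ D' ∧
      (k : ℚ) = (q : ℚ) ^ (r - 1)
          * ((q : ℚ) * ((q : ℚ) + 1) * ((q : ℚ) ^ (r - 1) - 1) / ((q : ℚ) - 1) - 1) ∧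
      (l1 : ℚ) = (q : ℚ) ^ (r - 1)
          * ((q : ℚ) ^ r + (q : ℚ) ^ (r - 1) + (q : ℚ) - 1
            + 2 * ((q : ℚ) ^ (r - 1) - (q : ℚ) ^ 2) / ((q : ℚ) - 1)) ∧
      (l2 : ℚ) = 2 * (q : ℚ) ^ (r - 2)
          * (((q : ℚ) ^ (r + 1) - (q : ℚ) ^ 2) / ((q : ℚ) - 1) - 1) ∧
      (nn : ℚ) = (q : ℚ) ^ (r + 1) * ((q : ℚ) ^ (r - 1) - 1) / ((q : ℚ) - 1) ∧
      Fintype.card G = 2 * nn ∧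
      (∀ g : G, Nat.card {x : G // x * g⁻¹ ∈ Set.range ι} = nn) ∧
      (∀ g : G, Nat.card {x : G // x * g⁻¹ ∈ D'} = k) ∧
      (∀ g h : G, g ≠ h →
        Nat.card {x : G // x * g⁻¹ ∈ D' ∧ x * h⁻¹ ∈ D'}
          = if g * h⁻¹ ∈ Set.range ι then l1 else l2) ∧
      (¬(q = 2 ∧ r = 2) → l1 ≠ l2) := by
  obtain ⟨s, rfl⟩ := Nat.exists_eq_add_of_le' hr
  have : Fact p.Prime := ⟨hp⟩
  have he0 : e ≠ 0 := Nat.one_le_iff_ne_zero.1 he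
  have hq1 : 1 < q := hq ▸ Nat.one_lt_pow he0 hp.one_lt
  have hA : Nat.card A = q ^ (s + 3) * qNumber q (s + 1) := by
    rw [Nat.card_eq_fintype_card]
    qify
    rw [hcardA, natCast_qNumber hq1.ne', mul_div_assoc]
    rfl
  have hG : IsGeneralizedDihedral ι b := ⟨hinj, hb2, hbconj, hbnot, hdecomp⟩
  obtain ⟨φ, hφ⟩ := exists_injective_monoidHom_of_pi_galoisField he0 hsub
  obtain ⟨D, hinv, hone, hD⟩ := hG.exists_isDivisibleDifferenceSet hφ
    ((GaloisField.card p e he0).trans hq.symm) (Module.finrank_fin_fun _) hA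
  refine ⟨D, _, _, _, Fintype.card A, hinv, hone, natCast_ddgDegree_eq_div hq1 s,
    natCast_ddgLambda₁_eq_div hq1 s, natCast_ddgLambda₂_eq_div hq1 s, hcardA, hcardG,
    fun g => ?_, fun g => ?_, fun g h hgh => ?_, fun hqr => ?_⟩
  · rw [← Nat.card_eq_fintype_card, ← Nat.card_range_of_injective hinj]
    exact ncard_setOf_mul_mem (Set.range ι) g⁻¹
  · exact (ncard_setOf_mul_mem D g⁻¹).trans hD.ncard_eq
  · exact (hD.ncard_common hgh).trans (ite_congr rfl (fun _ => rfl) fun _ => rfl)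
  · exact ddgLambda₁_ne_ddgLambda₂ hq1 (by omega)
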